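/- arXiv:2505.03959 — 3 statements merged into one kernel-verified Lean document; each statement's English description precedes it below -/
import Mathlib

section
/- A bipartite graph G = (A, B, E) has an A-partitioning cover of cost at most k if and only if there exists a sequence of at most k edge editions and vertex splittings, with vertex splittings applied only to vertices of B (and their copies), transforming G into a disjoint union of bicliques. -/
/- Common framework: bipartite graphs on vertex set `ℕ` with side labels,
   edge editions, vertex splittings, and the bicluster-editing numbers. -/

namespace BCE

/-- A graph on a finite subset of `ℕ` equipped with a labelling of its
vertices into two sides `A` and `B`. -/
structure BGraph where
  A : Set ℕ
  B : Set ℕ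
  finA : A.Finite
  finB : B.Finite
  Adj : ℕ → ℕ → Prop
  symm : ∀ u v, Adj u v → Adj v u

/-- The vertex set of a graph. -/
def verts (G : BGraph) : Set ℕ := G.A ∪ G.B

/-- The open neighbourhood of a vertex. -/
def nbhd (G : BGraph) (v : ℕ) : Set ℕ := {u | G.Adj v u}

/-- `G = (A, B, E)` is bipartite: the sides are disjoint and every edge joins
a vertex of `A` with a vertex of `B`. -/
def Bipartite (G : BGraph) : Prop :=
  Disjoint G.A G.B ∧
    ∀ u v, G.Adj u v → (u ∈ G.A ∧ v ∈ G.B) ∨ (u ∈ G.B ∧ v ∈ G.A)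

/-- A (bipartite) graph is a disjoint union of bicliques iff whenever
`a-b-c-d` is a walk, `a` and `d` are adjacent (equivalently, every connected
component is a complete bipartite graph). -/
def IsBicliqueUnion (G : BGraph) : Prop :=
  ∀ a b c d, G.Adj a b → G.Adj b c → G.Adj c d → G.Adj a d

/-- The editing operations: deletion of an edge, addition of an edge, and
splitting of a vertex `v` into `v` and a fresh vertex `v'` whose
neighbourhoods `N1`, `N2` cover the neighbourhood of `v`. -/
inductive Op where
  | del : ℕ → ℕ → Op
  | add : ℕ → ℕ → Op
  | split : ℕ → ℕ → Set ℕ → Set ℕ → Op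

/-- `op` is a vertex splitting. -/
def IsSplitOp : Op → Prop
  | Op.split _ _ _ _ => True
  | _ => False

/-- `OpStep sA sB op G G'` : performing the single operation `op` on `G`
yields `G'`; vertex splittings are allowed on side `A` (resp. `B`) only if
`sA` (resp. `sB`) is `true`.  A copy created by a splitting is put on the
same side as the split vertex. -/
inductive OpStep (sA sB : Bool) : Op → BGraph → BGraph → Prop where
  | del {G G' : BGraph} {u v : ℕ}
      (h : G.Adj u v) (hA : G'.A = G.A) (hB : G'.B = G.B)
      (hadj : ∀ x y, G'.Adj x y ↔
        (G.Adj x y ∧ ¬((x = u ∧ y = v) ∨ (x = v ∧ y = u)))) :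
      OpStep sA sB (Op.del u v) G G'
  | add {G G' : BGraph} {u v : ℕ}
      (hu : u ∈ G.A) (hv : v ∈ G.B) (h : ¬ G.Adj u v)
      (hA : G'.A = G.A) (hB : G'.B = G.B)
      (hadj : ∀ x y, G'.Adj x y ↔
        (G.Adj x y ∨ (x = u ∧ y = v) ∨ (x = v ∧ y = u))) :
      OpStep sA sB (Op.add u v) G G'
  | split {G G' : BGraph} {v v' : ℕ} {N1 N2 : Set ℕ}
      (hside : (v ∈ G.A ∧ sA = true) ∨ (v ∈ G.B ∧ sB = true))
      (hfresh : v' ∉ verts G)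
      (hcover : N1 ∪ N2 = nbhd G v)
      (hA : v ∈ G.A → G'.A = insert v' G.A ∧ G'.B = G.B)
      (hB : v ∈ G.B → G'.A = G.A ∧ G'.B = insert v' G.B)
      (hadj : ∀ x y, G'.Adj x y ↔
        ((G.Adj x y ∧ x ≠ v ∧ y ≠ v) ∨ (x = v ∧ y ∈ N1) ∨ (y = v ∧ x ∈ N1) ∨
          (x = v' ∧ y ∈ N2) ∨ (y = v' ∧ x ∈ N2))) :
      OpStep sA sB (Op.split v v' N1 N2) G G'

/-- `ApplySeq sA sB L G G'` : applying the sequence of operations `L`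
to `G` yields `G'`. -/
def ApplySeq (sA sB : Bool) : List Op → BGraph → BGraph → Prop
  | [], G, G' => G' = G
  | op :: L, G, G'' => ∃ G', OpStep sA sB op G G' ∧ ApplySeq sA sB L G' G''

/-- The sequence `L` transforms `G` into a disjoint union of bicliques. -/
def Solves (sA sB : Bool) (L : List Op) (G : BGraph) : Prop :=
  ∃ G', ApplySeq sA sB L G G' ∧ IsBicliqueUnion G'

/-- `bcevs G` : the minimum length of a sequence of edge editions and vertex
splittings transforming `G` into a disjoint union of bicliques. -/
noncomputable def bcevs (G : BGraph) : ℕ :=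
  sInf {n | ∃ L, L.length = n ∧ Solves true true L G}

/-- `bceovs G` (that is, `bceovs(G, A)`) : the minimum length of such a
sequence in which vertex splittings are applied only to vertices of the side
`A` (and their copies, which are also on side `A`). -/
noncomputable def bceovs (G : BGraph) : ℕ :=
  sInf {n | ∃ L, L.length = n ∧ Solves true false L G}

/-- The subgraph of `G` induced by `S`. -/
def induce (G : BGraph) (S : Set ℕ) : BGraph where
  A := G.A ∩ S
  B := G.B ∩ S
  finA := G.finA.subset Set.inter_subset_left
  finB := G.finB.subset Set.inter_subset_left
  Adj := fun u v => G.Adj u v ∧ u ∈ S ∧ v ∈ S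
  symm := fun u v h => ⟨G.symm u v h.1, h.2.2, h.2.1⟩

/-- `G` is a tree (as an abstract graph on its vertex set). -/
def IsTreeB (G : BGraph) : Prop :=
  (SimpleGraph.induce (verts G) (SimpleGraph.fromRel G.Adj)).IsTree

/-- `G` is connected. -/
def ConnectedB (G : BGraph) : Prop :=
  (SimpleGraph.induce (verts G) (SimpleGraph.fromRel G.Adj)).Connected

/-- The set `S` induces a biclique in `G`: every vertex of `S` on side `A` is
adjacent to every vertex of `S` on side `B`. -/
def IsBicliqueOn (G : BGraph) (S : Set ℕ) : Prop :=
  ∀ u ∈ S ∩ G.A, ∀ v ∈ S ∩ G.B, G.Adj u v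

/-- The set `S` induces a star in `G`: some centre `c ∈ S` is adjacent to all
other vertices of `S`, and every edge inside `S` uses the centre. -/
def IsStarOn (G : BGraph) (S : Set ℕ) : Prop :=
  ∃ c ∈ S, (∀ v ∈ S, v ≠ c → G.Adj c v) ∧
    (∀ u ∈ S, ∀ v ∈ S, G.Adj u v → u = c ∨ v = c)

/-- An `A`-partitioning cover of `G`: a collection of subsets of `A ∪ B`
covering all vertices whose traces on `A` form a partition of `A` (every
vertex of `A` lies in a unique member of the collection). -/
def IsAPartCover (G : BGraph) (C : Set (Set ℕ)) : Prop :=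
  (∀ X ∈ C, X ⊆ verts G) ∧
  (∀ v ∈ verts G, ∃ X ∈ C, v ∈ X) ∧
  (∀ a ∈ G.A, ∃! X, X ∈ C ∧ a ∈ X)

/-- The cost of an `A`-partitioning cover: each `a ∈ A` lying in the unique
set `X ∈ C` costs `|(B ∩ X) \ N(a)| + |N(a) \ X|`; each `b ∈ B` lying in `j`
members of `C` costs `j - 1`. -/
noncomputable def coverCost (G : BGraph) (C : Set (Set ℕ)) : ℕ :=
  (∑ᶠ a ∈ G.A, ∑ᶠ X ∈ {X ∈ C | a ∈ X},
      (((G.B ∩ X) \ nbhd G a).ncard + ((nbhd G a) \ X).ncard)) +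
  ∑ᶠ b ∈ G.B, ({X ∈ C | b ∈ X}.ncard - 1)

/-- The twin class of a vertex: all vertices of `G` with the same open
neighbourhood. -/
def twinClass (G : BGraph) (v : ℕ) : Set ℕ :=
  {u ∈ verts G | nbhd G u = nbhd G v}

/-- The twin classes of `G`. -/
def twinClasses (G : BGraph) : Set (Set ℕ) :=
  {T | ∃ v ∈ verts G, T = twinClass G v}

/-- A cover is twin-adapted if every member contains each twin class either
entirely or not at all. -/
def TwinAdapted (G : BGraph) (C : Set (Set ℕ)) : Prop :=
  ∀ T ∈ twinClasses G, ∀ X ∈ C, T ∩ X = ∅ ∨ T ⊆ X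

/-- `G` is a cycle with consecutive vertices `p 0, p 1, …, p (m-1)`
(indices modulo `m`), the vertices of even index forming side `A`. -/
def IsCycleWith (G : BGraph) (p : ℕ → ℕ) (m : ℕ) : Prop :=
  (∀ i j, i < m → j < m → p i = p j → i = j) ∧
  G.A = p '' {i | i < m ∧ i % 2 = 0} ∧
  G.B = p '' {i | i < m ∧ i % 2 = 1} ∧
  (∀ x y, G.Adj x y ↔ ∃ i < m,
    (x = p i ∧ y = p ((i + 1) % m)) ∨ (y = p i ∧ x = p ((i + 1) % m)))

/-- `G` is a path with `l` edges and consecutive vertices `p 0, …, p l`,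
the vertices of even index forming side `A`. -/
def IsPathWith (G : BGraph) (p : ℕ → ℕ) (l : ℕ) : Prop :=
  (∀ i j, i ≤ l → j ≤ l → p i = p j → i = j) ∧
  G.A = p '' {i | i ≤ l ∧ i % 2 = 0} ∧
  G.B = p '' {i | i ≤ l ∧ i % 2 = 1} ∧
  (∀ x y, G.Adj x y ↔ ∃ i < l,
    (x = p i ∧ y = p (i + 1)) ∨ (y = p i ∧ x = p (i + 1)))

end BCE

namespace BCE

/-- Some member of `C` contains both `a` and `y`. -/
def Share (C : Set (Set ℕ)) (a y : ℕ) : Prop := ∃ X ∈ C, a ∈ X ∧ y ∈ X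

/-- The pairs of `A × B` on which adjacency in `G` disagrees with lying in a
common member of `C`. -/
def mismatch (G : BGraph) (C : Set (Set ℕ)) : Set (ℕ × ℕ) :=
  {p | p.1 ∈ G.A ∧ p.2 ∈ G.B ∧ ¬(G.Adj p.1 p.2 ↔ Share C p.1 p.2)}

theorem mismatch_finite (G : BGraph) (C : Set (Set ℕ)) : (mismatch G C).Finite :=
  (G.finA.prod G.finB).subset fun _ hp => ⟨hp.1, hp.2.1⟩

theorem verts_finite (G : BGraph) : (verts G).Finite := G.finA.union G.finB

theorem Bipartite.right_mem {G : BGraph} (hG : Bipartite G) {a y : ℕ} (ha : a ∈ G.A)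
    (h : G.Adj a y) : y ∈ G.B :=
  (hG.2 a y h).elim And.right fun h' => (Set.disjoint_left.1 hG.1 ha h'.1).elim

theorem Bipartite.left_mem {G : BGraph} (hG : Bipartite G) {b y : ℕ} (hb : b ∈ G.B)
    (h : G.Adj b y) : y ∈ G.A :=
  (hG.2 b y h).elim (fun h' => (Set.disjoint_left.1 hG.1 h'.1 hb).elim) And.right

theorem IsAPartCover.finite {G : BGraph} {C : Set (Set ℕ)} (hC : IsAPartCover G C) :
    C.Finite :=
  (verts_finite G).finite_subsets.subset hC.1

theorem IsAPartCover.of_sides_eq {G G' : BGraph} {C : Set (Set ℕ)} (hC : IsAPartCover G C)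
    (hA : G'.A = G.A) (hB : G'.B = G.B) : IsAPartCover G' C := by
  simpa only [IsAPartCover, verts, hA, hB] using hC

theorem mem_iff_share {G : BGraph} {C : Set (Set ℕ)} (hC : IsAPartCover G C) {a : ℕ}
    (ha : a ∈ G.A) {X : Set ℕ} (hX : X ∈ C) (haX : a ∈ X) (y : ℕ) :
    y ∈ X ↔ Share C a y := by
  refine ⟨fun hy => ⟨X, hX, haX, hy⟩, ?_⟩
  rintro ⟨Y, hY, haY, hy⟩
  rwa [(hC.2.2 a ha).unique ⟨hX, haX⟩ ⟨hY, haY⟩]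

theorem ncard_mismatch (G : BGraph) (C : Set (Set ℕ)) :
    (mismatch G C).ncard = ∑ᶠ a ∈ G.A, {y | (a, y) ∈ mismatch G C}.ncard := by
  classical
  rw [Set.ncard_eq_toFinset_card _ (mismatch_finite G C),
    finsum_mem_eq_finite_toFinset_sum _ G.finA,
    Finset.card_eq_sum_card_fiberwise (f := Prod.fst) (t := G.finA.toFinset)]
  · refine Finset.sum_congr rfl fun a _ => ?_
    rw [← Set.ncard_image_of_injective _ (Prod.mk_right_injective a), ← Set.ncard_coe_finset]
    congr 1
    ext ⟨x, y⟩
    simp only [Finset.coe_filter, Set.Finite.mem_toFinset, Set.mem_ofPred_eq, Set.mem_image,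
      Prod.mk.injEq]
    constructor
    · rintro ⟨h, rfl⟩
      exact ⟨y, h, rfl, rfl⟩
    · rintro ⟨z, h, rfl, rfl⟩
      exact ⟨h, rfl⟩
  · intro p hp
    simp only [Set.Finite.coe_toFinset] at hp ⊢
    exact hp.1

theorem coverCost_eq {G : BGraph} (hG : Bipartite G) {C : Set (Set ℕ)}
    (hC : IsAPartCover G C) :
    coverCost G C =
      (mismatch G C).ncard + ∑ᶠ b ∈ G.B, ({X ∈ C | b ∈ X}.ncard - 1) := by
  rw [coverCost, ncard_mismatch]
  congr 1
  refine finsum_mem_congr rfl fun a ha => ?_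
  obtain ⟨X, ⟨hX, haX⟩, huniq⟩ := hC.2.2 a ha
  have hsingle : {X ∈ C | a ∈ X} = {X} := by
    ext Y
    exact ⟨fun h => huniq Y h, fun h => by rw [Set.mem_singleton_iff.1 h]; exact ⟨hX, haX⟩⟩
  have hN : nbhd G a ⊆ G.B := fun y hy => hG.right_mem ha hy
  rw [hsingle, finsum_mem_singleton, ← Set.ncard_union_eq
    (Set.disjoint_left.2 fun y h h' => h'.2 h.1.2)
    (G.finB.subset fun y h => h.1.1) (G.finB.subset fun y h => hN h.1)]
  congr 1
  ext y
  have hmem := mem_iff_share hC ha hX haX y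
  have hy : G.Adj a y → y ∈ G.B := fun h => hN h
  simp only [mismatch, nbhd, Set.mem_union, Set.mem_sdiff, Set.mem_inter_iff, Set.mem_ofPred_eq]
  tauto

theorem finsum_mem_eq_add_sdiff_singleton (f : ℕ → ℕ) {s : Set ℕ} (hs : s.Finite) {v : ℕ}
    (hv : v ∈ s) : ∑ᶠ b ∈ s, f b = f v + ∑ᶠ b ∈ s \ {v}, f b := by
  rw [← finsum_mem_insert f (Set.notMem_sdiff_of_mem (Set.mem_singleton v)) hs.sdiff, Set.insert_sdiff_singleton,
    Set.insert_eq_of_mem hv]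

theorem finsum_mem_mono {f g : ℕ → ℕ} {s : Set ℕ} (hs : s.Finite)
    (h : ∀ b ∈ s, f b ≤ g b) : ∑ᶠ b ∈ s, f b ≤ ∑ᶠ b ∈ s, g b := by
  rw [finsum_mem_eq_finite_toFinset_sum _ hs, finsum_mem_eq_finite_toFinset_sum _ hs]
  exact Finset.sum_le_sum fun b hb => h b (hs.mem_toFinset.1 hb)

theorem OpStep.bipartite {op : Op} {G G' : BGraph} (hG : Bipartite G)
    (h : OpStep false true op G G') : Bipartite G' := by
  cases h with
  | del h hA hB hadj =>
    refine ⟨by rw [hA, hB]; exact hG.1, fun x y hxy => ?_⟩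
    rw [hA, hB]
    exact hG.2 x y ((hadj x y).1 hxy).1
  | add hu hv h hA hB hadj =>
    refine ⟨by rw [hA, hB]; exact hG.1, fun x y hxy => ?_⟩
    rw [hA, hB]
    rcases (hadj x y).1 hxy with h | ⟨rfl, rfl⟩ | ⟨rfl, rfl⟩
    · exact hG.2 x y h
    · exact Or.inl ⟨hu, hv⟩
    · exact Or.inr ⟨hv, hu⟩
  | @split _ _ v v' N1 N2 hside hfresh hcover hA hB hadj =>
    have hv : v ∈ G.B := by simpa using hside
    obtain ⟨hA', hB'⟩ := hB hv
    have hN : ∀ y, y ∈ N1 ∨ y ∈ N2 → y ∈ G.A := fun y hy =>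
      hG.left_mem hv (show y ∈ nbhd G v from hcover ▸ hy)
    refine ⟨?_, fun x y hxy => ?_⟩
    · rw [hA', hB', Set.disjoint_insert_right]
      exact ⟨fun h => hfresh (Or.inl h), hG.1⟩
    · rw [hA', hB']
      rcases (hadj x y).1 hxy with h | ⟨rfl, h⟩ | ⟨rfl, h⟩ | ⟨rfl, h⟩ | ⟨rfl, h⟩
      · exact (hG.2 x y h.1).imp (fun h => ⟨h.1, Or.inr h.2⟩) fun h => ⟨Or.inr h.1, h.2⟩
      · exact Or.inr ⟨Or.inr hv, hN y (Or.inl h)⟩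
      · exact Or.inl ⟨hN x (Or.inl h), Or.inr hv⟩
      · exact Or.inr ⟨Or.inl rfl, hN y (Or.inr h)⟩
      · exact Or.inl ⟨hN x (Or.inr h), Or.inl rfl⟩

theorem ncard_mismatch_le_of_subset_insert {G G' : BGraph} {C : Set (Set ℕ)} {p : ℕ × ℕ}
    (h : mismatch G C ⊆ insert p (mismatch G' C)) :
    (mismatch G C).ncard ≤ (mismatch G' C).ncard + 1 :=
  (Set.ncard_le_ncard h ((mismatch_finite G' C).insert p)).trans (Set.ncard_insert_le _ _)

/-- Two graphs on the same sides that differ in one pair only have covers of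
almost the same cost. -/
theorem coverCost_le_of_adj_iff {G G' : BGraph} (hG : Bipartite G) (hG' : Bipartite G')
    {C : Set (Set ℕ)} (hC : IsAPartCover G' C) (hA : G'.A = G.A) (hB : G'.B = G.B) {a b : ℕ}
    (hadj : ∀ x ∈ G.A, ∀ y ∈ G.B, (x, y) ≠ (a, b) → (G'.Adj x y ↔ G.Adj x y)) :
    coverCost G C ≤ coverCost G' C + 1 := by
  rw [coverCost_eq hG (hC.of_sides_eq hA.symm hB.symm), coverCost_eq hG' hC, hB]
  have : (mismatch G C).ncard ≤ (mismatch G' C).ncard + 1 := by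
    refine ncard_mismatch_le_of_subset_insert (p := (a, b)) ?_
    rintro ⟨x, y⟩ ⟨hx, hy, h⟩
    by_cases hxy : (x, y) = (a, b)
    · exact Or.inl hxy
    · refine Or.inr ⟨hA ▸ hx, hB ▸ hy, ?_⟩
      rwa [hadj x hx y hy hxy]
  omega

/-- Identifying the copy `v'` with `v` in every member of a cover of the split
graph yields a cover of the original graph. -/
theorem exists_cover_of_split {G G' : BGraph} (hG : Bipartite G) (hG' : Bipartite G')
    {v v' : ℕ} {N1 N2 : Set ℕ} (hv : v ∈ G.B) (hfresh : v' ∉ verts G)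
    (hcover : N1 ∪ N2 = nbhd G v) (hA : G'.A = G.A) (hB : G'.B = insert v' G.B)
    (hadj : ∀ x y, G'.Adj x y ↔
      ((G.Adj x y ∧ x ≠ v ∧ y ≠ v) ∨ (x = v ∧ y ∈ N1) ∨ (y = v ∧ x ∈ N1) ∨
        (x = v' ∧ y ∈ N2) ∨ (y = v' ∧ x ∈ N2)))
    {C : Set (Set ℕ)} (hC : IsAPartCover G' C) :
    ∃ D, IsAPartCover G D ∧ coverCost G D ≤ coverCost G' C + 1 := by
  classical
  set g : ℕ → ℕ := fun x => if x = v' then v else x with hg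
  have hgv' : g v' = v := by simp [hg]
  have hgne : ∀ x, x ≠ v' → g x = x := fun x hx => by simp [hg, hx]
  have hAv' : v' ∉ G.A := fun h => hfresh (Or.inl h)
  have hBv' : v' ∉ G.B := fun h => hfresh (Or.inr h)
  have hAv : v ∉ G.A := fun h => Set.disjoint_left.1 hG.1 h hv
  have hverts : verts G' = insert v' (verts G) := by
    simp only [verts, hA, hB, Set.union_insert]
  have hmem : ∀ (X : Set ℕ) (y : ℕ), y ≠ v → y ≠ v' → (y ∈ g '' X ↔ y ∈ X) := by
    intro X y hyv hyv'
    constructor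
    · rintro ⟨x, hx, rfl⟩
      by_cases hxv : x = v'
      · exact (hyv (by rw [hxv, hgv'])).elim
      · rwa [hgne x hxv]
    · exact fun h => ⟨y, h, hgne y hyv'⟩
  have hmemv : ∀ X : Set ℕ, v ∈ g '' X ↔ v ∈ X ∨ v' ∈ X := by
    intro X
    have hvv' : v ≠ v' := fun h => hBv' (h ▸ hv)
    constructor
    · rintro ⟨x, hx, hxv⟩
      by_cases hxv' : x = v'
      · exact Or.inr (hxv' ▸ hx)
      · rw [hgne x hxv'] at hxv
        exact Or.inl (hxv ▸ hx)
    · rintro (h | h)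
      · exact ⟨v, h, hgne v hvv'⟩
      · exact ⟨v', h, hgv'⟩
  have hmemA : ∀ (X : Set ℕ) (a : ℕ), a ∈ G.A → (a ∈ g '' X ↔ a ∈ X) := fun X a ha =>
    hmem X a (fun h => hAv (h ▸ ha)) (fun h => hAv' (h ▸ ha))
  set D : Set (Set ℕ) := (fun X => g '' X) '' C with hDdef
  have hD : IsAPartCover G D := by
    refine ⟨?_, ?_, ?_⟩
    · rintro _ ⟨X, hX, rfl⟩ _ ⟨x, hx, rfl⟩
      by_cases hxv : x = v'
      · rw [hxv, hgv']
        exact Or.inr hv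
      · rw [hgne x hxv]
        have := hC.1 X hX hx
        rw [hverts] at this
        exact this.resolve_left hxv
    · intro x hx
      obtain ⟨X, hX, hxX⟩ := hC.2.1 x (by rw [hverts]; exact Or.inr hx)
      exact ⟨g '' X, ⟨X, hX, rfl⟩, x, hxX, hgne x fun h => hfresh (h ▸ hx)⟩
    · intro a ha
      obtain ⟨X, ⟨hX, haX⟩, huniq⟩ := hC.2.2 a (hA ▸ ha)
      refine ⟨g '' X, ⟨⟨X, hX, rfl⟩, (hmemA X a ha).2 haX⟩, ?_⟩
      rintro _ ⟨⟨Y, hY, rfl⟩, haY⟩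
      rw [huniq Y ⟨hY, (hmemA Y a ha).1 haY⟩]
  refine ⟨D, hD, ?_⟩
  have hshare : ∀ a ∈ G.A, ∀ y, y ≠ v → y ≠ v' → (Share D a y ↔ Share C a y) := by
    intro a ha y hyv hyv'
    constructor
    · rintro ⟨_, ⟨X, hX, rfl⟩, haX, hyX⟩
      exact ⟨X, hX, (hmemA X a ha).1 haX, (hmem X y hyv hyv').1 hyX⟩
    · rintro ⟨X, hX, haX, hyX⟩
      exact ⟨_, ⟨X, hX, rfl⟩, (hmemA X a ha).2 haX, (hmem X y hyv hyv').2 hyX⟩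
  have hsharev : ∀ a ∈ G.A, (Share D a v ↔ Share C a v ∨ Share C a v') := by
    intro a ha
    constructor
    · rintro ⟨_, ⟨X, hX, rfl⟩, haX, hyX⟩
      exact ((hmemv X).1 hyX).imp (fun h => ⟨X, hX, (hmemA X a ha).1 haX, h⟩)
        fun h => ⟨X, hX, (hmemA X a ha).1 haX, h⟩
    · rintro (⟨X, hX, haX, hyX⟩ | ⟨X, hX, haX, hyX⟩)
      · exact ⟨_, ⟨X, hX, rfl⟩, (hmemA X a ha).2 haX, (hmemv X).2 (Or.inl hyX)⟩
      · exact ⟨_, ⟨X, hX, rfl⟩, (hmemA X a ha).2 haX, (hmemv X).2 (Or.inr hyX)⟩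
  have hadjv : ∀ a ∈ G.A, (G.Adj a v ↔ G'.Adj a v ∨ G'.Adj a v') := by
    intro a ha
    have h1 : a ≠ v := fun h => hAv (h ▸ ha)
    have h2 : a ≠ v' := fun h => hAv' (h ▸ ha)
    have h3 : v' ≠ v := fun h => hBv' (h ▸ hv)
    have h4 : ¬ G.Adj a v' := fun h => hBv' (hG.right_mem ha h)
    have h5 : G.Adj a v ↔ a ∈ N1 ∨ a ∈ N2 := by
      rw [← Set.mem_union, hcover]
      exact ⟨G.symm a v, G.symm v a⟩
    rw [hadj, hadj, h5]
    simp [h1, h2, h3, h4, h3.symm]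
  have hmis : (mismatch G D).ncard ≤ (mismatch G' C).ncard := by
    refine (Set.ncard_le_ncard (t := Prod.map id g '' mismatch G' C) ?_
      ((mismatch_finite G' C).image _)).trans (Set.ncard_image_le (mismatch_finite G' C))
    rintro ⟨a, y⟩ ⟨ha, hy, h⟩
    simp only at ha hy h
    have hav : a ≠ v := fun h => hAv (h ▸ ha)
    have hav' : a ≠ v' := fun h => hAv' (h ▸ ha)
    by_cases hyv : y = v
    · subst hyv
      rw [hadjv a ha, hsharev a ha] at h
      by_cases h1 : G'.Adj a y ↔ Share C a y
      · refine ⟨(a, v'), ⟨hA ▸ ha, hB ▸ Or.inl rfl, fun h2 => h ?_⟩, by simp [hgv']⟩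
        rw [h1]
        simp only at h2
        rw [h2]
      · exact ⟨(a, y), ⟨hA ▸ ha, hB ▸ Or.inr hy, h1⟩,
          by simp [hgne y fun h => hBv' (h ▸ hy)]⟩
    · have hyv' : y ≠ v' := fun h => hBv' (h ▸ hy)
      refine ⟨(a, y), ⟨hA ▸ ha, hB ▸ Or.inr hy, ?_⟩, by simp [hgne y hyv']⟩
      rw [hshare a ha y hyv hyv'] at h
      simp only [hadj]
      simpa [hav, hav', hyv, hyv'] using h
  have hfin : ∀ y, {X ∈ C | y ∈ X}.Finite := fun y => hC.finite.subset fun X h => h.1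
  have hcount : ∀ y ∈ G.B \ {v},
      {X ∈ D | y ∈ X}.ncard - 1 ≤ {X ∈ C | y ∈ X}.ncard - 1 := by
    intro y hy
    refine Nat.sub_le_sub_right ((Set.ncard_le_ncard (t := (fun X => g '' X) '' {X ∈ C | y ∈ X})
      ?_ ((hfin y).image _)).trans (Set.ncard_image_le (hfin y))) 1
    rintro _ ⟨⟨X, hX, rfl⟩, hyX⟩
    exact ⟨X, ⟨hX, (hmem X y hy.2 fun h => hBv' (h ▸ hy.1)).1 hyX⟩, rfl⟩
  have hcountv : {X ∈ D | v ∈ X}.ncard ≤ {X ∈ C | v ∈ X}.ncard + {X ∈ C | v' ∈ X}.ncard := by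
    refine ((Set.ncard_le_ncard
      (t := (fun X => g '' X) '' ({X ∈ C | v ∈ X} ∪ {X ∈ C | v' ∈ X})) ?_
      (((hfin v).union (hfin v')).image _)).trans
      (Set.ncard_image_le ((hfin v).union (hfin v')))).trans (Set.ncard_union_le _ _)
    rintro _ ⟨⟨X, hX, rfl⟩, hyX⟩
    exact ⟨X, ((hmemv X).1 hyX).imp (fun h => ⟨hX, h⟩) fun h => ⟨hX, h⟩, rfl⟩
  have hsum := finsum_mem_mono G.finB.sdiff hcount
  rw [coverCost_eq hG hD, coverCost_eq hG' hC, hB, finsum_mem_insert _ hBv' G.finB,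
    finsum_mem_eq_add_sdiff_singleton _ G.finB hv,
    finsum_mem_eq_add_sdiff_singleton (fun b => {X ∈ C | b ∈ X}.ncard - 1) G.finB hv]
  omega

theorem OpStep.exists_cover {op : Op} {G G' : BGraph} (hG : Bipartite G)
    (h : OpStep false true op G G') {C : Set (Set ℕ)} (hC : IsAPartCover G' C) :
    ∃ D, IsAPartCover G D ∧ coverCost G D ≤ coverCost G' C + 1 := by
  have hG' := h.bipartite hG
  cases h with
  | @del _ _ u v h hA hB hadj =>
    refine ⟨C, hC.of_sides_eq hA.symm hB.symm, ?_⟩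
    rcases hG.2 u v h with ⟨hu, hv⟩ | ⟨hu, hv⟩
    · refine coverCost_le_of_adj_iff (a := u) (b := v) hG hG' hC hA hB
        fun x hx y hy hxy => ?_
      have : x ≠ v := fun h => Set.disjoint_left.1 hG.1 hx (h ▸ hv)
      rw [hadj]
      simp_all
    · refine coverCost_le_of_adj_iff (a := v) (b := u) hG hG' hC hA hB
        fun x hx y hy hxy => ?_
      have : x ≠ u := fun h => Set.disjoint_left.1 hG.1 hx (h ▸ hu)
      rw [hadj]
      simp_all
  | @add _ _ u v hu hv h hA hB hadj =>
    refine ⟨C, hC.of_sides_eq hA.symm hB.symm, ?_⟩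
    refine coverCost_le_of_adj_iff (a := u) (b := v) hG hG' hC hA hB
        fun x hx y hy hxy => ?_
    have : x ≠ v := fun h => Set.disjoint_left.1 hG.1 hx (h ▸ hv)
    rw [hadj]
    simp_all
  | split hside hfresh hcover hA hB hadj =>
    have hv := hside.resolve_left fun h => Bool.false_ne_true h.2
    obtain ⟨hA', hB'⟩ := hB hv.1
    exact exists_cover_of_split hG hG' hv.1 hfresh hcover hA' hB' hadj hC

/-- A disjoint union of bicliques has a cover of cost zero. -/
theorem IsBicliqueUnion.exists_cover {G : BGraph} (hG : Bipartite G) (h : IsBicliqueUnion G) :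
    ∃ C, IsAPartCover G C ∧ coverCost G C = 0 := by
  set X : ℕ → Set ℕ := fun a => {a' ∈ G.A | nbhd G a' = nbhd G a} ∪ nbhd G a with hXdef
  set C : Set (Set ℕ) := X '' G.A ∪ (fun b => {b}) '' {b ∈ G.B | nbhd G b = ∅} with hCdef
  have hnb : ∀ a a' b, G.Adj a b → G.Adj a' b → nbhd G a ⊆ nbhd G a' :=
    fun a a' b hab hab' d had => h a' b a d hab' (G.symm _ _ hab) had
  have hself : ∀ a ∈ G.A, a ∈ X a := fun a ha => Or.inl ⟨ha, rfl⟩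
  have hXeq : ∀ a a', nbhd G a = nbhd G a' → X a = X a' := fun a a' h => by
    simp only [hXdef, h]
  have hmemA : ∀ a ∈ G.A, ∀ a' ∈ G.A, a ∈ X a' → X a' = X a := by
    rintro a ha a' ha' (hm | hm)
    · exact hXeq _ _ hm.2.symm
    · exact (Set.disjoint_left.1 hG.1 ha (hG.right_mem ha' hm)).elim
  have hmemB : ∀ b ∈ G.B, ∀ a, b ∈ X a → G.Adj a b := by
    rintro b hb a (hm | hm)
    · exact (Set.disjoint_left.1 hG.1 hm.1 hb).elim
    · exact hm
  have huniq : ∀ a ∈ G.A, ∀ Y ∈ C, a ∈ Y → Y = X a := by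
    rintro a ha _ (⟨a', ha', rfl⟩ | ⟨b, ⟨hb, _⟩, rfl⟩) haY
    · exact hmemA a ha a' ha' haY
    · exact (Set.disjoint_left.1 hG.1 ha (Set.mem_singleton_iff.1 haY ▸ hb)).elim
  have hC : IsAPartCover G C := by
    refine ⟨?_, ?_, fun a ha => ⟨X a, ⟨Or.inl ⟨a, ha, rfl⟩, hself a ha⟩,
      fun Y hY => huniq a ha Y hY.1 hY.2⟩⟩
    · rintro _ (⟨a, ha, rfl⟩ | ⟨b, ⟨hb, _⟩, rfl⟩)
      · rintro y (hy | hy)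
        · exact Or.inl hy.1
        · exact Or.inr (hG.right_mem ha hy)
      · rintro y rfl
        exact Or.inr hb
    · rintro y (hy | hy)
      · exact ⟨X y, Or.inl ⟨y, hy, rfl⟩, hself y hy⟩
      · rcases Set.eq_empty_or_nonempty (nbhd G y) with he | ⟨a, ha⟩
        · exact ⟨{y}, Or.inr ⟨y, ⟨hy, he⟩, rfl⟩, rfl⟩
        · exact ⟨X a, Or.inl ⟨a, hG.left_mem hy ha, rfl⟩, Or.inr (G.symm _ _ ha)⟩
  refine ⟨C, hC, ?_⟩
  have hmis : mismatch G C = ∅ := by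
    rw [Set.eq_empty_iff_forall_notMem]
    rintro ⟨a, y⟩ ⟨ha, hy, hne⟩
    refine hne ⟨fun hay => ⟨X a, Or.inl ⟨a, ha, rfl⟩, hself a ha, Or.inr hay⟩, ?_⟩
    rintro ⟨Y, hY, haY, hyY⟩
    rw [huniq a ha Y hY haY] at hyY
    exact hmemB y hy a hyY
  rw [coverCost_eq hG hC, hmis, Set.ncard_empty, zero_add]
  refine finsum_mem_eq_zero_of_forall_eq_zero fun b hb => Nat.sub_eq_zero_of_le ?_
  rw [Set.ncard_le_one (hC.finite.subset fun Y h => h.1)]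
  rintro _ ⟨⟨a, ha, rfl⟩ | ⟨c, ⟨hc, hce⟩, rfl⟩, hbY⟩
    _ ⟨⟨a', ha', rfl⟩ | ⟨c', ⟨hc', hce'⟩, rfl⟩, hbY'⟩
  · have h1 := hmemB b hb a hbY
    have h2 := hmemB b hb a' hbY'
    exact hXeq _ _ ((hnb a a' b h1 h2).antisymm (hnb a' a b h2 h1))
  · have h1 : a ∈ nbhd G b := G.symm _ _ (hmemB b hb a hbY)
    rw [Set.mem_singleton_iff.1 hbY', hce'] at h1
    exact h1.elim
  · have h1 : a' ∈ nbhd G b := G.symm _ _ (hmemB b hb a' hbY')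
    rw [Set.mem_singleton_iff.1 hbY, hce] at h1
    exact h1.elim
  · rw [← Set.mem_singleton_iff.1 hbY, ← Set.mem_singleton_iff.1 hbY']

theorem Solves.exists_cover {L : List Op} {G : BGraph} (hG : Bipartite G)
    (h : Solves false true L G) : ∃ C, IsAPartCover G C ∧ coverCost G C ≤ L.length := by
  induction L generalizing G with
  | nil =>
    obtain ⟨G', rfl, hG'⟩ := h
    obtain ⟨C, hC, hcost⟩ := hG'.exists_cover hG
    exact ⟨C, hC, hcost.le⟩
  | cons op L ih =>
    obtain ⟨G'', ⟨G', hstep, hseq⟩, hG''⟩ := h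
    obtain ⟨C, hC, hcost⟩ := ih (hstep.bipartite hG) ⟨G'', hseq, hG''⟩
    obtain ⟨D, hD, hcost'⟩ := hstep.exists_cover hG hC
    exact ⟨D, hD, hcost'.trans (Nat.succ_le_succ hcost)⟩

/-- Every mismatch of a cover can be repaired by a single edge edition. -/
theorem exists_step_of_mismatch {G : BGraph} (hG : Bipartite G) {C : Set (Set ℕ)}
    (hC : IsAPartCover G C) {a b : ℕ} (hab : (a, b) ∈ mismatch G C) :
    ∃ op G', OpStep false true op G G' ∧ IsAPartCover G' C ∧
      coverCost G' C + 1 ≤ coverCost G C := by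
  obtain ⟨ha, hb, hne⟩ := hab
  simp only at ha hb hne
  have key : ∀ op G', OpStep false true op G G' → G'.A = G.A → G'.B = G.B →
      (∀ x ∈ G.A, ∀ y ∈ G.B, (x, y) ≠ (a, b) → (G'.Adj x y ↔ G.Adj x y)) →
      (G'.Adj a b ↔ ¬ G.Adj a b) →
      ∃ op G', OpStep false true op G G' ∧ IsAPartCover G' C ∧
        coverCost G' C + 1 ≤ coverCost G C := by
    intro op G' hstep hA hB hadj hflip
    have hC' := hC.of_sides_eq hA hB
    refine ⟨op, G', hstep, hC', ?_⟩
    rw [coverCost_eq hG hC, coverCost_eq (hstep.bipartite hG) hC', hB]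
    have hsub : mismatch G' C ⊆ mismatch G C \ {(a, b)} := by
      rintro ⟨x, y⟩ ⟨hx, hy, hxy⟩
      rw [hA] at hx
      rw [hB] at hy
      simp only at hx hy hxy
      by_cases heq : (x, y) = (a, b)
      · obtain ⟨rfl, rfl⟩ := Prod.mk.inj heq
        exact (hxy (by tauto)).elim
      · exact ⟨⟨hx, hy, by rwa [hadj x hx y hy heq] at hxy⟩, heq⟩
    have h1 := Set.ncard_le_ncard hsub (mismatch_finite G C).sdiff
    have h2 := Set.ncard_sdiff_singleton_add_one
      (show (a, b) ∈ mismatch G C from ⟨ha, hb, hne⟩) (mismatch_finite G C)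
    omega
  have hAB : ∀ x ∈ G.A, x ≠ b := fun x hx h => Set.disjoint_left.1 hG.1 hx (h ▸ hb)
  by_cases hadj : G.Adj a b
  · refine key (Op.del a b)
      { G with
        Adj := fun x y => G.Adj x y ∧ ¬((x = a ∧ y = b) ∨ (x = b ∧ y = a))
        symm := fun x y h => ⟨G.symm _ _ h.1, fun h' => h.2 (by tauto)⟩ }
      (OpStep.del hadj rfl rfl fun _ _ => Iff.rfl) rfl rfl ?_ ?_
    · intro x hx y hy hxy
      have := hAB x hx
      simp_all
    · simp [hadj]
  · refine key (Op.add a b)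
      { G with
        Adj := fun x y => G.Adj x y ∨ (x = a ∧ y = b) ∨ (x = b ∧ y = a)
        symm := fun x y h => h.imp (G.symm _ _) (by tauto) }
      (OpStep.add ha hb hadj rfl rfl fun _ _ => Iff.rfl) rfl rfl ?_ ?_
    · intro x hx y hy hxy
      have := hAB x hx
      simp_all
    · simp [hadj]

/-- The graph obtained from `G` by moving the neighbours of `b` lying in `S` to
the new vertex `b'`. -/
def splitGraph (G : BGraph) (b b' : ℕ) (S : Set ℕ) : BGraph where
  A := G.A
  B := insert b' G.B
  finA := G.finA
  finB := G.finB.insert b'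
  Adj := fun x y =>
    (G.Adj x y ∧ x ≠ b ∧ y ≠ b) ∨ (x = b ∧ y ∈ nbhd G b \ S) ∨ (y = b ∧ x ∈ nbhd G b \ S) ∨
      (x = b' ∧ y ∈ nbhd G b ∩ S) ∨ (y = b' ∧ x ∈ nbhd G b ∩ S)
  symm := fun x y h => by
    rcases h with h | h | h | h | h
    · exact Or.inl ⟨G.symm _ _ h.1, h.2.2, h.2.1⟩
    all_goals tauto

/-- If `b` lies in two members of a cover without mismatches, splitting off the
part of `b` in one of them decreases the cost. -/
theorem exists_step_of_mem_two {G : BGraph} (hG : Bipartite G) {C : Set (Set ℕ)}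
    (hC : IsAPartCover G C) (hmis : mismatch G C = ∅) {b : ℕ} (hb : b ∈ G.B) {S T : Set ℕ}
    (hS : S ∈ C) (hT : T ∈ C) (hbS : b ∈ S) (hbT : b ∈ T) (hST : S ≠ T) :
    ∃ op G' D, OpStep false true op G G' ∧ IsAPartCover G' D ∧
      coverCost G' D + 1 ≤ coverCost G C := by
  classical
  obtain ⟨b', hfresh⟩ := (verts_finite G).exists_notMem
  have hAb' : b' ∉ G.A := fun h => hfresh (Or.inl h)
  have hBb' : b' ∉ G.B := fun h => hfresh (Or.inr h)
  have hAb : b ∉ G.A := fun h => Set.disjoint_left.1 hG.1 h hb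
  have hbb' : b ≠ b' := fun h => hBb' (h ▸ hb)
  have hCb' : ∀ X ∈ C, b' ∉ X := fun X hX h => hfresh (hC.1 X hX h)
  have hstep : OpStep false true (Op.split b b' (nbhd G b \ S) (nbhd G b ∩ S)) G
      (splitGraph G b b' S) :=
    OpStep.split (Or.inr ⟨hb, rfl⟩) hfresh (Set.sdiff_union_inter _ _) (fun h => (hAb h).elim)
      (fun _ => ⟨rfl, rfl⟩) fun _ _ => Iff.rfl
  set φ : Set ℕ → Set ℕ := fun X => if X = S then insert b' (S \ {b}) else X with hφ
  have hφS : φ S = insert b' (S \ {b}) := if_pos rfl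
  have hφne : ∀ X, X ≠ S → φ X = X := fun X hX => if_neg hX
  have hmem : ∀ (X : Set ℕ) (y : ℕ), y ≠ b → y ≠ b' → (y ∈ φ X ↔ y ∈ X) := by
    intro X y hy hy'
    by_cases hX : X = S
    · rw [hX, hφS]
      simp [hy, hy']
    · rw [hφne X hX]
  have hmemA : ∀ (X : Set ℕ) (a : ℕ), a ∈ G.A → (a ∈ φ X ↔ a ∈ X) := fun X a ha =>
    hmem X a (fun h => hAb (h ▸ ha)) fun h => hAb' (h ▸ ha)
  have hmemb : ∀ X, b ∈ φ X ↔ X ≠ S ∧ b ∈ X := by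
    intro X
    by_cases hX : X = S
    · rw [hX, hφS]
      simp [hbb']
    · rw [hφne X hX]
      simp [hX]
  have hmemb' : ∀ X ∈ C, (b' ∈ φ X ↔ X = S) := by
    intro X hX
    by_cases hXS : X = S
    · rw [hXS, hφS]
      simp
    · rw [hφne X hXS]
      simp [hXS, hCb' X hX]
  set D : Set (Set ℕ) := φ '' C with hDdef
  have hverts : verts (splitGraph G b b' S) = insert b' (verts G) := Set.union_insert
  have hD : IsAPartCover (splitGraph G b b' S) D := by
    refine ⟨?_, ?_, ?_⟩
    · rintro _ ⟨X, hX, rfl⟩ y hy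
      rw [hverts]
      by_cases hy' : y = b'
      · exact Or.inl hy'
      · by_cases hyb : y = b
        · exact Or.inr (Or.inr (hyb ▸ hb))
        · exact Or.inr (hC.1 X hX ((hmem X y hyb hy').1 hy))
    · intro y hy
      rw [hverts] at hy
      by_cases hyb : y = b
      · exact ⟨_, ⟨T, hT, rfl⟩, hyb ▸ (hmemb T).2 ⟨hST.symm, hbT⟩⟩
      by_cases hy' : y = b'
      · exact ⟨_, ⟨S, hS, rfl⟩, hy' ▸ (hmemb' S hS).2 rfl⟩
      · obtain ⟨X, hX, hyX⟩ := hC.2.1 y (hy.resolve_left hy')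
        exact ⟨_, ⟨X, hX, rfl⟩, (hmem X y hyb hy').2 hyX⟩
    · intro a ha
      obtain ⟨X, ⟨hX, haX⟩, huniq⟩ := hC.2.2 a ha
      refine ⟨φ X, ⟨⟨X, hX, rfl⟩, (hmemA X a ha).2 haX⟩, ?_⟩
      rintro _ ⟨⟨Y, hY, rfl⟩, haY⟩
      rw [huniq Y ⟨hY, (hmemA Y a ha).1 haY⟩]
  have hadj : ∀ a ∈ G.A, ∀ y ∈ G.B, ∀ X ∈ C, a ∈ X → (G.Adj a y ↔ y ∈ X) := by
    intro a ha y hy X hX haX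
    by_contra hne
    rw [mem_iff_share hC ha hX haX] at hne
    have : (a, y) ∈ mismatch G C := ⟨ha, hy, hne⟩
    rw [hmis] at this
    exact this
  have hmis' : mismatch (splitGraph G b b' S) D = ∅ := by
    rw [Set.eq_empty_iff_forall_notMem]
    rintro ⟨a, y⟩ ⟨ha, hy, hne⟩
    change a ∈ G.A at ha
    obtain ⟨X, ⟨hX, haX⟩, huniq⟩ := hC.2.2 a ha
    have haS : a ∈ S ↔ X = S := ⟨fun h => (huniq S ⟨hS, h⟩).symm, fun h => h ▸ haX⟩
    have hab : a ≠ b := fun h => hAb (h ▸ ha)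
    have hab' : a ≠ b' := fun h => hAb' (h ▸ ha)
    have hba : a ∈ nbhd G b ↔ b ∈ X := by
      rw [← hadj a ha b hb X hX haX]
      exact ⟨G.symm _ _, G.symm _ _⟩
    refine hne ?_
    rw [← mem_iff_share hD ha ⟨X, hX, rfl⟩ ((hmemA X a ha).2 haX)]
    simp only [splitGraph, Set.mem_sdiff, Set.mem_inter_iff, hba, haS]
    rcases hy with rfl | hy
    · have : ¬ G.Adj a y := fun h => hBb' (hG.right_mem ha h)
      rw [hmemb' X hX]
      simp only [this, hab, hab', hbb'.symm, false_and, true_and, false_or]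
      exact ⟨And.right, fun h => ⟨h ▸ hbS, h⟩⟩
    · have hyb' : y ≠ b' := fun h => hBb' (h ▸ hy)
      by_cases hyb : y = b
      · rw [hyb, hmemb X]
        simp [hab, hab', hbb', and_comm]
      · rw [hmem X y hyb hyb', ← hadj a ha y hy X hX haX]
        simp [hab, hab', hyb, hyb']
  have hfin : ∀ y, {X ∈ C | y ∈ X}.Finite := fun y => hC.finite.subset fun X h => h.1
  have hcount : ∀ y ∈ G.B \ {b},
      {X ∈ D | y ∈ X}.ncard - 1 ≤ {X ∈ C | y ∈ X}.ncard - 1 := by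
    intro y hy
    refine Nat.sub_le_sub_right ((Set.ncard_le_ncard (t := φ '' {X ∈ C | y ∈ X})
      ?_ ((hfin y).image _)).trans (Set.ncard_image_le (hfin y))) 1
    rintro _ ⟨⟨X, hX, rfl⟩, hyX⟩
    exact ⟨X, ⟨hX, (hmem X y hy.2 fun h => hBb' (h ▸ hy.1)).1 hyX⟩, rfl⟩
  have hcountb : {X ∈ D | b ∈ X}.ncard ≤ ({X ∈ C | b ∈ X} \ {S}).ncard := by
    refine (Set.ncard_le_ncard (t := φ '' ({X ∈ C | b ∈ X} \ {S})) ?_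
      ((hfin b).sdiff.image _)).trans (Set.ncard_image_le (hfin b).sdiff)
    rintro _ ⟨⟨X, hX, rfl⟩, hbX⟩
    exact ⟨X, ⟨⟨hX, ((hmemb X).1 hbX).2⟩, ((hmemb X).1 hbX).1⟩, rfl⟩
  have hcountb' : {X ∈ D | b' ∈ X}.ncard ≤ 1 := by
    rw [← Set.ncard_singleton (φ S)]
    refine Set.ncard_le_ncard ?_ (Set.finite_singleton _)
    rintro _ ⟨⟨X, hX, rfl⟩, hbX⟩
    rw [(hmemb' X hX).1 hbX]
    rfl
  have hdiff := Set.ncard_sdiff_singleton_add_one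
    (show S ∈ {X ∈ C | b ∈ X} from ⟨hS, hbS⟩) (hfin b)
  have htwo : 1 < {X ∈ C | b ∈ X}.ncard :=
    (Set.one_lt_ncard (hfin b)).2 ⟨S, ⟨hS, hbS⟩, T, ⟨hT, hbT⟩, hST⟩
  have hsum := finsum_mem_mono G.finB.sdiff hcount
  refine ⟨_, _, D, hstep, hD, ?_⟩
  rw [coverCost_eq hG hC, coverCost_eq (hstep.bipartite hG) hD, hmis, hmis',
    show (splitGraph G b b' S).B = insert b' G.B from rfl, finsum_mem_insert _ hBb' G.finB,
    finsum_mem_eq_add_sdiff_singleton _ G.finB hb,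
    finsum_mem_eq_add_sdiff_singleton (fun y => {X ∈ C | y ∈ X}.ncard - 1) G.finB hb]
  omega

/-- A graph with a cover having no mismatches and no vertex of `B` in two
members is a disjoint union of bicliques. -/
theorem isBicliqueUnion_of_cover {G : BGraph} (hG : Bipartite G) {C : Set (Set ℕ)}
    (hC : IsAPartCover G C) (hmis : mismatch G C = ∅)
    (hone : ∀ b ∈ G.B, ∀ S ∈ C, ∀ T ∈ C, b ∈ S → b ∈ T → S = T) : IsBicliqueUnion G := by
  have hadj : ∀ a ∈ G.A, ∀ y ∈ G.B, (G.Adj a y ↔ Share C a y) := by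
    intro a ha y hy
    by_contra hne
    have : (a, y) ∈ mismatch G C := ⟨ha, hy, hne⟩
    rw [hmis] at this
    exact this
  have key : ∀ a b c d, a ∈ G.A → G.Adj a b → G.Adj b c → G.Adj c d → G.Adj a d := by
    intro a b c d ha hab hbc hcd
    have hb := hG.right_mem ha hab
    have hc := hG.left_mem hb hbc
    have hd := hG.right_mem hc hcd
    obtain ⟨X, hX, haX, hbX⟩ := (hadj a ha b hb).1 hab
    obtain ⟨Y, hY, hcY, hbY⟩ := (hadj c hc b hb).1 (G.symm _ _ hbc)
    obtain rfl := hone b hb X hX Y hY hbX hbY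
    exact (hadj a ha d hd).2
      ⟨X, hX, haX, (mem_iff_share hC hc hX hcY d).2 ((hadj c hc d hd).1 hcd)⟩
  intro a b c d hab hbc hcd
  rcases hG.2 a b hab with ⟨ha, _⟩ | ⟨ha, hb⟩
  · exact key a b c d ha hab hbc hcd
  · have hd := hG.left_mem (hG.right_mem hb hbc) hcd
    exact G.symm _ _ (key d c b a hd (G.symm _ _ hcd) (G.symm _ _ hbc) (G.symm _ _ hab))

theorem IsAPartCover.exists_solves {G : BGraph} (hG : Bipartite G) {C : Set (Set ℕ)}
    (hC : IsAPartCover G C) {n : ℕ} (hn : coverCost G C ≤ n) :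
    ∃ L, L.length ≤ n ∧ Solves false true L G := by
  induction n generalizing G C with
  | zero =>
    refine ⟨[], le_rfl, G, rfl, ?_⟩
    have hmis : mismatch G C = ∅ := by
      rw [Set.eq_empty_iff_forall_notMem]
      rintro ⟨a, b⟩ hab
      obtain ⟨_, _, _, _, h⟩ := exists_step_of_mismatch hG hC hab
      omega
    refine isBicliqueUnion_of_cover hG hC hmis fun b hb S hS T hT hbS hbT => ?_
    by_contra hST
    obtain ⟨_, _, _, _, _, h⟩ := exists_step_of_mem_two hG hC hmis hb hS hT hbS hbT hST
    omega
  | succ n ih =>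
    have key : ∀ op G' D, OpStep false true op G G' → IsAPartCover G' D →
        coverCost G' D + 1 ≤ coverCost G C → ∃ L, L.length ≤ n + 1 ∧ Solves false true L G := by
      intro op G' D hstep hD hcost
      obtain ⟨L, hL, G'', hseq, hG''⟩ := ih (hstep.bipartite hG) hD (by omega)
      exact ⟨op :: L, Nat.succ_le_succ hL, G'', ⟨G', hstep, hseq⟩, hG''⟩
    rcases (mismatch G C).eq_empty_or_nonempty with hmis | ⟨⟨a, b⟩, hab⟩
    · by_cases hone : ∀ b ∈ G.B, ∀ S ∈ C, ∀ T ∈ C, b ∈ S → b ∈ T → S = T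
      · exact ⟨[], Nat.zero_le _, G, rfl, isBicliqueUnion_of_cover hG hC hmis hone⟩
      · push Not at hone
        obtain ⟨b, hb, S, hS, T, hT, hbS, hbT, hST⟩ := hone
        obtain ⟨op, G', D, hstep, hD, h⟩ :=
          exists_step_of_mem_two hG hC hmis hb hS hT hbS hbT hST
        exact key op G' D hstep hD h
    · obtain ⟨op, G', hstep, hD, h⟩ := exists_step_of_mismatch hG hC hab
      exact key op G' C hstep hD h

/-- A bipartite graph `G = (A, B, E)` has an `A`-partitioning
cover of cost at most `k` iff `G` can be transformed into a disjoint union of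
bicliques by at most `k` edge editions and vertex splittings, with splittings
applied only to vertices of `B` (and their copies). -/
theorem cover_equivalence (G : BGraph) (hbip : Bipartite G) (k : ℕ) :
    (∃ C, IsAPartCover G C ∧ coverCost G C ≤ k) ↔
    (∃ L, L.length ≤ k ∧ Solves false true L G) := by
  constructor
  · rintro ⟨C, hC, hcost⟩
    exact hC.exists_solves hbip hcost
  · rintro ⟨L, hL, h⟩
    obtain ⟨C, hC, hcost⟩ := h.exists_cover hbip
    exact ⟨C, hC, hcost.trans hL⟩

end BCE
end

section
/- Let G = (A, B, E) be a connected bipartite graph having exactly k twin classes contained in A. Then every A-partitioning cover of G has cost at least √k − 1. -/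
namespace BCE

/-- If the edges of a connected graph are mapped by `φ` to non-loops in a finite set `E` of
unordered pairs, then `φ` takes at most `|E| + 1` values. -/
lemma ncard_range_le_card_add_one {W U : Type*} {H : SimpleGraph W} (hH : H.Connected)
    (φ : W → U) (E : Finset (Sym2 U))
    (hne : ∀ u v, H.Adj u v → φ u ≠ φ v) (hE : ∀ u v, H.Adj u v → s(φ u, φ v) ∈ E) :
    (Set.range φ).ncard ≤ E.card + 1 := by
  have hconn : (H.map (Set.rangeFactorization φ)).Connected :=
    hH.map (SimpleGraph.Hom.map (Set.rangeFactorization φ) H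
      fun {u v} h h' => hne u v h (congrArg Subtype.val h')) Set.rangeFactorization_surjective
  refine hconn.card_vert_le_card_edgeSet_add_one.trans (Nat.add_le_add_right ?_ 1)
  rw [Nat.card_coe_set_eq, ← Set.ncard_coe_finset E]
  refine Set.ncard_le_ncard_of_injOn (Sym2.map Subtype.val) ?_
    (Sym2.map.injective Subtype.val_injective).injOn
  intro e he
  induction e with
  | _ x y =>
    obtain ⟨-, u, v, huv, rfl, rfl⟩ := he
    exact hE u v huv

/-- The contribution of `a ∈ A` to the cost of a cover in which `a` lies in `X`. -/
noncomputable def vertexCost (G : BGraph) (X : Set ℕ) (a : ℕ) : ℕ :=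
  ((G.B ∩ X) \ nbhd G a).ncard + (nbhd G a \ X).ncard

lemma nbhd_subset_B {G : BGraph} (hbip : Bipartite G) {a : ℕ} (ha : a ∈ G.A) :
    nbhd G a ⊆ G.B := by
  intro b hb
  rcases hbip.2 a b hb with h | h
  · exact h.2
  · exact absurd h.1 (Set.disjoint_left.1 hbip.1 ha)

lemma nbhd_eq_of_vertexCost_eq_zero {G : BGraph} (hbip : Bipartite G) {X : Set ℕ} {a : ℕ}
    (ha : a ∈ G.A) (h : vertexCost G X a = 0) : nbhd G a = G.B ∩ X := by
  have hsub := nbhd_subset_B hbip ha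
  have hfin : (nbhd G a).Finite := G.finB.subset hsub
  obtain ⟨h₁, h₂⟩ := Nat.add_eq_zero_iff.1 h
  rw [Set.ncard_eq_zero ((G.finB.inter_of_left X).sdiff), Set.sdiff_eq_empty] at h₁
  rw [Set.ncard_eq_zero hfin.sdiff, Set.sdiff_eq_empty] at h₂
  exact Set.Subset.antisymm (Set.subset_inter hsub h₂) h₁

lemma coverCost_eq_sum {G : BGraph} {C : Set (Set ℕ)} {f : ℕ → Set ℕ}
    (hf : ∀ a ∈ G.A, {X ∈ C | a ∈ X} = {f a}) :
    coverCost G C = ∑ a ∈ G.finA.toFinset, vertexCost G (f a) a +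
      ∑ b ∈ G.finB.toFinset, ({X ∈ C | b ∈ X}.ncard - 1) := by
  unfold coverCost
  rw [finsum_mem_eq_finite_toFinset_sum _ G.finA, finsum_mem_eq_finite_toFinset_sum _ G.finB]
  congr 1
  refine Finset.sum_congr rfl fun a ha => ?_
  rw [hf a (G.finA.mem_toFinset.1 ha), finsum_mem_singleton, vertexCost]

/-- The members of a cover that meet `A` are at most one more than its cost. -/
lemma ncard_image_le_coverCost_add_one {G : BGraph} (hbip : Bipartite G) (hconn : ConnectedB G)
    {C : Set (Set ℕ)} (hC : IsAPartCover G C) {f : ℕ → Set ℕ}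
    (hf : ∀ a ∈ G.A, {X ∈ C | a ∈ X} = {f a}) :
    (f '' G.A).ncard ≤ coverCost G C + 1 := by
  classical
  have hCfin : C.Finite := (G.finA.union G.finB).finite_subsets.subset hC.1
  have hCb : ∀ b, {X ∈ C | b ∈ X}.Finite := fun b => hCfin.subset (Set.sep_subset _ _)
  have hfC : ∀ a ∈ G.A, f a ∈ C := fun a ha =>
    (show f a ∈ {X ∈ C | a ∈ X} by rw [hf a ha]; rfl).1
  have hdel : ∀ a, ((nbhd G a \ f a) ∩ G.B).Finite := fun a => G.finB.inter_of_right _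
  let D : Finset (Set ℕ × ℕ) :=
    (G.finB.toFinset.biUnion fun b => (hCb b).toFinset.image fun X => (X, b)) ∪
      G.finA.toFinset.biUnion fun a => (hdel a).toFinset.image fun b => (f a, b)
  have hD : ∀ a ∈ G.A, ∀ b ∈ G.B, G.Adj a b → (f a, b) ∈ D := by
    intro a ha b hb hab
    by_cases hbf : b ∈ f a
    · refine Finset.mem_union_left _ (Finset.mem_biUnion.2 ⟨b, by simpa using hb, ?_⟩)
      simpa using ⟨hfC a ha, hbf⟩
    · refine Finset.mem_union_right _ (Finset.mem_biUnion.2 ⟨a, by simpa using ha, ?_⟩)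
      simpa using ⟨⟨hab, hbf⟩, hb⟩
  have hDcard : D.card ≤ coverCost G C + G.B.ncard := by
    have h₁ : (G.finB.toFinset.biUnion fun b =>
        (hCb b).toFinset.image fun X => (X, b)).card ≤
        ∑ b ∈ G.finB.toFinset, (({X ∈ C | b ∈ X}.ncard - 1) + 1) := by
      refine Finset.card_biUnion_le.trans (Finset.sum_le_sum fun b _ => ?_)
      refine Finset.card_image_le.trans ?_
      rw [← Set.ncard_eq_toFinset_card _ (hCb b)]
      omega
    have h₂ : (G.finA.toFinset.biUnion fun a =>
        (hdel a).toFinset.image fun b => (f a, b)).card ≤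
        ∑ a ∈ G.finA.toFinset, vertexCost G (f a) a := by
      refine Finset.card_biUnion_le.trans (Finset.sum_le_sum fun a ha => ?_)
      refine Finset.card_image_le.trans ?_
      rw [← Set.ncard_eq_toFinset_card _ (hdel a)]
      have hfin := G.finB.subset (nbhd_subset_B hbip (G.finA.mem_toFinset.1 ha))
      exact (Set.ncard_le_ncard Set.inter_subset_left hfin.sdiff).trans (Nat.le_add_left _ _)
    rw [Finset.sum_add_distrib, Finset.sum_const, smul_eq_mul, mul_one,
      ← Set.ncard_eq_toFinset_card _ G.finB] at h₁
    have := Finset.card_union_le (G.finB.toFinset.biUnion fun b =>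
      (hCb b).toFinset.image fun X => (X, b)) (G.finA.toFinset.biUnion fun a =>
        (hdel a).toFinset.image fun b => (f a, b))
    rw [coverCost_eq_sum hf]
    change (_ ∪ _ : Finset _).card ≤ _
    omega
  let φ : verts G → Set ℕ ⊕ ℕ := fun v => if (v : ℕ) ∈ G.A then .inl (f v) else .inr v
  have hφA : ∀ v : verts G, (v : ℕ) ∈ G.A → φ v = .inl (f v) := fun v hv => if_pos hv
  have hφB : ∀ v : verts G, (v : ℕ) ∈ G.B → φ v = .inr v := fun v hv =>
    if_neg (Set.disjoint_right.1 hbip.1 hv)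
  have hside : ∀ u v : verts G,
      (SimpleGraph.induce (verts G) (SimpleGraph.fromRel G.Adj)).Adj u v →
      G.Adj u v ∧ ((u : ℕ) ∈ G.A ∧ (v : ℕ) ∈ G.B ∨ (u : ℕ) ∈ G.B ∧ (v : ℕ) ∈ G.A) := by
    intro u v huv
    have hadj : G.Adj u v := huv.2.elim id (G.symm _ _)
    exact ⟨hadj, hbip.2 u v hadj⟩
  have hcard := ncard_range_le_card_add_one hconn φ
    (D.image fun p => s(Sum.inl p.1, Sum.inr p.2))
    (fun u v huv => by
      rcases (hside u v huv).2 with ⟨hu, hv⟩ | ⟨hu, hv⟩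
      · simp [hφA u hu, hφB v hv]
      · simp [hφB u hu, hφA v hv])
    (fun u v huv => by
      obtain ⟨hadj, ⟨hu, hv⟩ | ⟨hu, hv⟩⟩ := hside u v huv
      · rw [hφA u hu, hφB v hv]
        exact Finset.mem_image_of_mem (fun p : Set ℕ × ℕ => s(Sum.inl p.1, Sum.inr p.2))
          (hD u hu v hv hadj)
      · rw [hφB u hu, hφA v hv, Sym2.eq_swap]
        exact Finset.mem_image_of_mem (fun p : Set ℕ × ℕ => s(Sum.inl p.1, Sum.inr p.2))
          (hD v hv u hu (G.symm _ _ hadj)))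
  have hrange : Set.range φ = Sum.inl '' (f '' G.A) ∪ Sum.inr '' G.B := by
    ext x
    constructor
    · rintro ⟨v, rfl⟩
      rcases v.2 with hv | hv
      · exact .inl ⟨f v, ⟨v, hv, rfl⟩, (hφA v hv).symm⟩
      · exact .inr ⟨v, hv, (hφB v hv).symm⟩
    · rintro (⟨_, ⟨a, ha, rfl⟩, rfl⟩ | ⟨b, hb, rfl⟩)
      · exact ⟨⟨a, .inl ha⟩, hφA _ ha⟩
      · exact ⟨⟨b, .inr hb⟩, hφB _ hb⟩
  have hdisj : Disjoint (Sum.inl '' (f '' G.A) : Set (Set ℕ ⊕ ℕ)) (Sum.inr '' G.B) := by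
    rw [Set.disjoint_left]
    rintro _ ⟨_, -, rfl⟩ ⟨_, -, h⟩
    exact Sum.inr_ne_inl h
  rw [hrange, Set.ncard_union_eq hdisj ((G.finA.image f).image _) (G.finB.image _),
    Set.ncard_image_of_injective _ Sum.inl_injective,
    Set.ncard_image_of_injective _ Sum.inr_injective] at hcard
  have := Finset.card_image_le (s := D)
    (f := fun p => (s(Sum.inl p.1, Sum.inr p.2) : Sym2 (Set ℕ ⊕ ℕ)))
  omega

/-- Vertices of cost zero in the same member of the cover are twins, so the twin classes in `A`
are counted by the members of the cover meeting `A` and the vertices of positive cost. -/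
lemma ncard_twinClasses_le {G : BGraph} (hbip : Bipartite G) (f : ℕ → Set ℕ) :
    {T ∈ twinClasses G | T ⊆ G.A}.ncard ≤
      (f '' G.A).ncard + ∑ a ∈ G.finA.toFinset, vertexCost G (f a) a := by
  classical
  let P : Finset ℕ := G.finA.toFinset.filter fun a => vertexCost G (f a) a ≠ 0
  have hsub : {T ∈ twinClasses G | T ⊆ G.A} ⊆
      (fun X => {u ∈ verts G | nbhd G u = G.B ∩ X}) '' (f '' G.A) ∪ twinClass G '' (P : Set ℕ) := by
    rintro _ ⟨⟨a, hav, rfl⟩, hT⟩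
    have ha : a ∈ G.A := hT ⟨hav, rfl⟩
    by_cases h : vertexCost G (f a) a = 0
    · refine .inl ⟨f a, ⟨a, ha, rfl⟩, ?_⟩
      simp only [twinClass, nbhd_eq_of_vertexCost_eq_zero hbip ha h]
    · exact .inr ⟨a, by simpa [P] using ⟨ha, h⟩, rfl⟩
  have hfin := G.finA.image f
  have hP : P.card ≤ ∑ a ∈ G.finA.toFinset, vertexCost G (f a) a := by
    rw [Finset.card_filter]
    refine Finset.sum_le_sum fun a _ => ?_
    split_ifs <;> omega
  refine (Set.ncard_le_ncard hsub ((hfin.image _).union (P.finite_toSet.image _))).trans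
    ((Set.ncard_union_le _ _).trans (Nat.add_le_add (Set.ncard_image_le hfin) ?_))
  exact (Set.ncard_image_le P.finite_toSet).trans (by rwa [Set.ncard_coe_finset])

/-- Let `G = (A, B, E)` be a connected bipartite graph having
exactly `k` twin classes contained in `A`.  Then every `A`-partitioning cover
of `G` has cost at least `√k - 1`. -/
theorem cover_cost_sqrt_lower_bound (G : BGraph) (hbip : Bipartite G)
    (hconn : ConnectedB G) (k : ℕ)
    (hk : {T ∈ twinClasses G | T ⊆ G.A}.ncard = k) :
    ∀ C, IsAPartCover G C → Real.sqrt k - 1 ≤ (coverCost G C : ℝ) := by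
  intro C hC
  have hex : ∀ a, ∃ X, a ∈ G.A → {Y ∈ C | a ∈ Y} = {X} := by
    intro a
    by_cases ha : a ∈ G.A
    · obtain ⟨X, hX, huniq⟩ := hC.2.2 a ha
      refine ⟨X, fun _ => Set.eq_singleton_iff_unique_mem.2 ⟨hX, huniq⟩⟩
    · exact ⟨∅, fun h => absurd h ha⟩
  choose f hf using hex
  have h₁ := ncard_image_le_coverCost_add_one hbip hconn hC hf
  have h₂ := ncard_twinClasses_le hbip f
  have h₃ := coverCost_eq_sum hf
  have hle : k ≤ (coverCost G C + 1) ^ 2 := by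
    have : k ≤ 2 * coverCost G C + 1 := by omega
    nlinarith
  rw [sub_le_iff_le_add]
  exact Real.sqrt_le_iff.2 ⟨by positivity, by exact_mod_cast hle⟩

end BCE
end

section
/- Let φ be a 3-CNF formula with M clauses in which every clause contains three distinct variables, every variable occurs at most four times, and whenever a variable occurs exactly twice positively and twice negatively its list of occurrences alternates (positive in its first and third clauses, negative in its second and fourth). Let G_φ be the graph of the construction and let OPT(φ) be the maximum number of clauses of φ simultaneously satisfiable by a truth assignment. Then bcevs(G_φ) ≤ 9M − OPT(φ), i.e., there is a sequence of at most 8M + (M − OPT(φ)) edge editions and vertex splittings transforming G_φ into a disjoint union of bicliques. -/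
namespace BCE

/-- A 3-CNF formula with `m` clauses, each clause `c < m` consisting of three
literals `lit c 0, lit c 1, lit c 2` (a literal is a variable together with a
polarity), the three variables of a clause being pairwise distinct. -/
structure CNF3 where
  m : ℕ
  lit : ℕ → Fin 3 → ℕ × Bool
  distinct : ∀ c, c < m → ∀ i j : Fin 3, (lit c i).1 = (lit c j).1 → i = j

/-- The variable `v` occurs in clause `c`. -/
def OccIn (F : CNF3) (v c : ℕ) : Prop := ∃ i : Fin 3, (F.lit c i).1 = v

/-- The variable `v` occurs positively in clause `c`. -/
def PosIn (F : CNF3) (v c : ℕ) : Prop := ∃ i : Fin 3, F.lit c i = (v, true)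

open Classical in
/-- `d(v)`: the number of clauses in which the variable `v` occurs. -/
noncomputable def occCount (F : CNF3) (v : ℕ) : ℕ :=
  ((Finset.range F.m).filter (fun c => OccIn F v c)).card

open Classical in
/-- The (0-based) position of clause `c` in the list of clauses in which `v`
occurs (ordered by clause index). -/
noncomputable def occIndex (F : CNF3) (v c : ℕ) : ℕ :=
  ((Finset.range c).filter (fun c' => OccIn F v c')).card

open Classical in
/-- The (1-based) index on the cycle of `v` of the vertex `v_c` attached to
clause `c`: `6(j-1)+1` for a positive occurrence and `6(j-1)+3` for a
negative one, `j` being the 1-based occurrence index. -/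
noncomputable def attachIdx (F : CNF3) (v c : ℕ) : ℕ :=
  if PosIn F v c then 6 * occIndex F v c + 1 else 6 * occIndex F v c + 3

/-- Encoding into `ℕ` of the cycle vertex `v_i` (1-based index `i`). -/
def cycVert (v i : ℕ) : ℕ := 2 * Nat.pair v i + 1

/-- Encoding into `ℕ` of the clause vertex of clause `c`. -/
def clVert (c : ℕ) : ℕ := 2 * c

/-- The vertex set of the construction `G_F`: one vertex per clause, and the
cycle vertices `v_1, …, v_{6 d(v)}` for every variable `v`. -/
def VsetF (F : CNF3) : Set ℕ :=
  {x | ∃ c < F.m, x = clVert c} ∪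
  {x | ∃ v i, 1 ≤ i ∧ i ≤ 6 * occCount F v ∧ x = cycVert v i}

/-- The side `A` of `G_F`: the cycle vertices of even index. -/
def AsetF (F : CNF3) : Set ℕ :=
  {x | ∃ v i, 1 ≤ i ∧ i ≤ 6 * occCount F v ∧ i % 2 = 0 ∧ x = cycVert v i}

/-- The side `B` of `G_F`: the cycle vertices of odd index together with the
clause vertices. -/
def BsetF (F : CNF3) : Set ℕ :=
  {x | ∃ c < F.m, x = clVert c} ∪
  {x | ∃ v i, 1 ≤ i ∧ i ≤ 6 * occCount F v ∧ i % 2 = 1 ∧ x = cycVert v i}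

/-- Oriented edges of `G_F`: consecutive cycle edges (cyclically), and the
edge from each clause vertex `c` to `v_c` for every variable `v` of `c`. -/
def AdjF0 (F : CNF3) (x y : ℕ) : Prop :=
  (∃ v i, 1 ≤ i ∧ i ≤ 6 * occCount F v ∧
    x = cycVert v i ∧ y = cycVert v (i % (6 * occCount F v) + 1)) ∨
  (∃ c < F.m, ∃ v, OccIn F v c ∧ x = clVert c ∧ y = cycVert v (attachIdx F v c))

/-- The adjacency relation of the construction `G_F`. -/
def AdjF (F : CNF3) (x y : ℕ) : Prop := AdjF0 F x y ∨ AdjF0 F y x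

/-- `G` is (an encoded copy of) the graph `G_F` of the construction, with the
bipartition `(A, B)` where `A` consists of the cycle vertices with even index
and `B` of the cycle vertices with odd index together with the clause
vertices. -/
def IsGF (F : CNF3) (G : BGraph) : Prop :=
  G.A = AsetF F ∧ G.B = BsetF F ∧ ∀ x y, G.Adj x y ↔ AdjF F x y

/-- `F` is satisfiable. -/
def Satisfiable (F : CNF3) : Prop :=
  ∃ σ : ℕ → Bool, ∀ c < F.m, ∃ i : Fin 3, σ (F.lit c i).1 = (F.lit c i).2

open Classical in
/-- The number of clauses of `F` satisfied by the assignment `σ`. -/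
noncomputable def satCount (F : CNF3) (σ : ℕ → Bool) : ℕ :=
  ((Finset.range F.m).filter
    (fun c => ∃ i : Fin 3, σ (F.lit c i).1 = (F.lit c i).2)).card

/-- `OPT(F)`: the maximum number of clauses of `F` simultaneously satisfiable
by a truth assignment. -/
noncomputable def maxSat (F : CNF3) : ℕ :=
  sSup {t | ∃ σ : ℕ → Bool, t = satCount F σ}

open Classical in
/-- The number of clauses in which `v` occurs positively. -/
noncomputable def posCount (F : CNF3) (v : ℕ) : ℕ :=
  ((Finset.range F.m).filter (fun c => PosIn F v c)).card

/-- Whenever a variable occurs exactly twice positively and twice negatively,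
its occurrence list alternates: positive occurrences are exactly those with
even (0-based) occurrence index. -/
def Alternating (F : CNF3) : Prop :=
  ∀ v, posCount F v = 2 → occCount F v = 4 →
    ∀ c < F.m, OccIn F v c → (PosIn F v c ↔ occIndex F v c % 2 = 0)

end BCE

namespace BCE

/-! ### Deleting edges -/

/-- Every symmetric subrelation of the adjacency relation whose complement is covered by a finite
set `S` of pairs can be reached by at most `S.card` edge deletions. -/
lemma exists_deletion_seq (H : ℕ → ℕ → Prop) (hs : ∀ x y, H x y → H y x)
    (S : Finset (ℕ × ℕ)) (G : BGraph) (hH : ∀ x y, H x y → G.Adj x y)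
    (hS : ∀ x y, G.Adj x y → H x y ∨ (x, y) ∈ S ∨ (y, x) ∈ S) :
    ∃ L G', L.length ≤ S.card ∧ ApplySeq true true L G G' ∧
      ∀ x y, G'.Adj x y ↔ H x y := by
  induction S using Finset.induction_on generalizing G with
  | empty =>
    refine ⟨[], G, by simp, rfl, fun x y => ⟨fun h => ?_, hH x y⟩⟩
    simpa using hS x y h
  | insert e S he ih =>
    obtain ⟨u, v⟩ := e
    rw [Finset.card_insert_of_notMem he]
    by_cases huv : G.Adj u v ∧ ¬ H u v
    · let G₁ : BGraph :=
        { A := G.A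
          B := G.B
          finA := G.finA
          finB := G.finB
          Adj := fun x y => G.Adj x y ∧ ¬((x = u ∧ y = v) ∨ (x = v ∧ y = u))
          symm := fun x y h => ⟨G.symm x y h.1, by tauto⟩ }
      obtain ⟨L, G', hL, hseq, hG'⟩ := ih G₁
        (fun x y h => ⟨hH x y h, by
          rintro (⟨rfl, rfl⟩ | ⟨rfl, rfl⟩)
          · exact huv.2 h
          · exact huv.2 (hs _ _ h)⟩)
        (fun x y h => by
          have h1 := hS x y h.1
          have h2 := h.2
          simp only [Finset.mem_insert, Prod.mk.injEq] at h1
          tauto)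
      exact ⟨Op.del u v :: L, G', by simpa using hL,
        ⟨G₁, OpStep.del huv.1 rfl rfl fun _ _ => Iff.rfl, hseq⟩, hG'⟩
    · obtain ⟨L, G', hL, hseq, hG'⟩ := ih G hH (fun x y h => by
        have h1 := hS x y h
        simp only [Finset.mem_insert, Prod.mk.injEq] at h1
        rcases h1 with h1 | (⟨rfl, rfl⟩ | h1) | (⟨rfl, rfl⟩ | h1)
        · exact Or.inl h1
        · tauto
        · tauto
        · have := G.symm _ _ h
          have := hs y x
          tauto
        · tauto)
      exact ⟨L, G', by omega, hseq, hG'⟩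

/-- The edge `xy` joins the centre of a star to one of its vertices, where `p` maps every vertex to
the centre of its star. -/
def StarEdge (p : ℕ → ℕ) (x y : ℕ) : Prop := p x = p y ∧ (x = p x ∨ y = p y)

/-- If the edges of a loopless graph that are not star edges are covered by a finite set `S` of
pairs, the graph becomes a disjoint union of stars after at most `S.card` deletions. -/
lemma exists_solution_of_stars (G : BGraph) (p : ℕ → ℕ) (S : Finset (ℕ × ℕ))
    (hloop : ∀ x, ¬ G.Adj x x)
    (hS : ∀ x y, G.Adj x y → StarEdge p x y ∨ (x, y) ∈ S ∨ (y, x) ∈ S) :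
    ∃ L, L.length ≤ S.card ∧ Solves true true L G := by
  obtain ⟨L, G', hL, hseq, hG'⟩ := exists_deletion_seq
    (fun x y => G.Adj x y ∧ StarEdge p x y)
    (fun x y h => ⟨G.symm x y h.1, h.2.1.symm, h.2.2.symm⟩) S G (fun x y h => h.1)
    (fun x y h => (hS x y h).imp_left fun h' => ⟨h, h'⟩)
  refine ⟨L, hL, G', hseq, fun a b c d hab hbc hcd => ?_⟩
  rw [hG'] at hab hbc hcd ⊢
  obtain ⟨hab, e1, f1⟩ := hab
  obtain ⟨hbc, e2, f2⟩ := hbc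
  obtain ⟨hcd, e3, f3⟩ := hcd
  have nbc : b ≠ c := fun h => hloop c (h ▸ hbc)
  have ncd : c ≠ d := fun h => hloop d (h ▸ hcd)
  have nab : a ≠ b := fun h => hloop b (h ▸ hab)
  by_cases hb : b = p b
  · have hd : d = b := by grind
    subst hd
    exact ⟨hab, e1, f1⟩
  · have hc : a = c := by grind
    subst hc
    exact ⟨hcd, e3, f3⟩

/-! ### The construction -/

lemma cycVert_inj {v i w j : ℕ} : cycVert v i = cycVert w j ↔ v = w ∧ i = j := by
  rw [← Nat.pair_eq_pair]
  unfold cycVert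
  omega

lemma clVert_ne_cycVert (c v i : ℕ) : clVert c ≠ cycVert v i := by
  unfold cycVert clVert
  omega

open Classical in
lemma occIndex_eq_count (F : CNF3) (v c : ℕ) :
    occIndex F v c = Nat.count (OccIn F v) c := by
  rw [Nat.count_eq_card_filter_range, occIndex]

open Classical in
lemma occCount_eq_count (F : CNF3) (v : ℕ) :
    occCount F v = Nat.count (OccIn F v) F.m := by
  rw [Nat.count_eq_card_filter_range, occCount]

lemma occIndex_lt_occCount {F : CNF3} {v c : ℕ} (hc : c < F.m) (h : OccIn F v c) :
    occIndex F v c < occCount F v := by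
  classical
  rw [occIndex_eq_count, occCount_eq_count]
  exact Nat.count_strict_mono h hc

lemma exists_occIndex_eq {F : CNF3} {v j : ℕ} (hj : j < occCount F v) :
    ∃ c < F.m, OccIn F v c ∧ occIndex F v c = j := by
  classical
  rw [occCount_eq_count] at hj
  have hcard (hf : (Set.ofPred (OccIn F v)).Finite) : j < hf.toFinset.card :=
    hj.trans_le (Nat.count_le_card hf _)
  refine ⟨Nat.nth (OccIn F v) j, Nat.nth_lt_of_lt_count hj, Nat.nth_mem j hcard, ?_⟩
  rw [occIndex_eq_count, Nat.count_nth hcard]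

lemma not_adjF_self (F : CNF3) (x : ℕ) : ¬ AdjF F x x := by
  suffices ¬ AdjF0 F x x from fun h => this (or_self_iff.mp h)
  rintro (⟨v, i, h1, h2, rfl, h⟩ | ⟨c, -, v, -, rfl, h⟩)
  · have h3 := (cycVert_inj.mp h).2
    rcases h2.lt_or_eq with h2 | h2
    · rw [Nat.mod_eq_of_lt h2] at h3
      omega
    · rw [h2, Nat.mod_self] at h3
      omega
  · exact clVert_ne_cycVert _ _ _ h

/-- The centre of the star containing the vertex of index `i` on a cycle of length `n`: the
centres are the indices congruent to `1` modulo `3` for a true variable and those congruent to `0`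
for a false one. -/
def cycCentre (b : Bool) (n i : ℕ) : ℕ :=
  if b then 3 * (i % n / 3) + 1 else if i = 1 then n else 3 * ((i + 1) / 3)

/-- The index of one of the two edges deleted in the block `j` of six consecutive cycle edges. -/
def cutIdx (b : Bool) (j : ℕ) (second : Bool) : ℕ :=
  6 * j + (if b then 2 else 1) + (if second then 3 else 0)

lemma cycle_edge_cases (b : Bool) {d i : ℕ} (h1 : 1 ≤ i) (hi : i ≤ 6 * d) :
    (cycCentre b (6 * d) i = cycCentre b (6 * d) (i % (6 * d) + 1) ∧
      (i = cycCentre b (6 * d) i ∨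
        i % (6 * d) + 1 = cycCentre b (6 * d) (i % (6 * d) + 1))) ∨
    (i % (6 * d) + 1 = i + 1 ∧ ∃ j < d, ∃ s, i = cutIdx b j s) := by
  rcases hi.lt_or_eq with hi | rfl
  · rw [Nat.mod_eq_of_lt hi]
    by_cases hcut : i % 3 = if b then 2 else 1
    · refine Or.inr ⟨rfl, (i - 1) / 6, by omega, decide (4 ≤ (i - 1) % 6 + 1), ?_⟩
      cases b <;> simp [cutIdx] at hcut ⊢ <;> split_ifs <;> omega
    · left
      rcases Nat.lt_or_ge (i + 1) (6 * d) with h | h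
      · cases b <;> simp [cycCentre, Nat.mod_eq_of_lt hi, Nat.mod_eq_of_lt h] at hcut ⊢ <;>
          (try split_ifs) <;> omega
      · have h : i + 1 = 6 * d := by omega
        cases b <;> simp [cycCentre, Nat.mod_eq_of_lt hi, h] at hcut ⊢ <;>
          (try split_ifs) <;> omega
  · left
    have : 1 % (6 * d) = 1 := Nat.mod_eq_of_lt (by omega)
    cases b <;> simp [cycCentre, this]
    omega

lemma cycCentre_attachIdx {F : CNF3} {c : ℕ} (hc : c < F.m) {b : Bool} {i : Fin 3}
    (hb : b = (F.lit c i).2) :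
    cycCentre b (6 * occCount F (F.lit c i).1) (attachIdx F (F.lit c i).1 c) =
      attachIdx F (F.lit c i).1 c := by
  have hlt := occIndex_lt_occCount hc (v := (F.lit c i).1) ⟨i, rfl⟩
  have hpos : PosIn F (F.lit c i).1 c ↔ b = true := by
    constructor
    · rintro ⟨k, hk⟩
      obtain rfl := F.distinct c hc k i (by rw [hk])
      rw [hb, hk]
    · rintro rfl
      exact ⟨i, Prod.ext rfl hb.symm⟩
  unfold attachIdx
  cases b
  · simp [hpos, cycCentre]
    omega
  · have : (6 * occIndex F (F.lit c i).1 c + 1) % (6 * occCount F (F.lit c i).1) =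
        6 * occIndex F (F.lit c i).1 c + 1 := Nat.mod_eq_of_lt (by omega)
    simp [hpos, cycCentre, this]
    omega

open Classical in
/-- A literal of the clause `c` made true by `σ`, if there is one. -/
noncomputable def trueLit (F : CNF3) (σ : ℕ → Bool) (c : ℕ) : Option (Fin 3) :=
  if h : ∃ i : Fin 3, σ (F.lit c i).1 = (F.lit c i).2 then some h.choose else none

lemma trueLit_spec {F : CNF3} {σ : ℕ → Bool} {c : ℕ} {i : Fin 3}
    (h : trueLit F σ c = some i) : σ (F.lit c i).1 = (F.lit c i).2 := by
  unfold trueLit at h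
  split_ifs at h with hex
  rw [← Option.some.inj h]
  exact hex.choose_spec

/-- The map sending every vertex of the construction to the centre of its star. -/
noncomputable def starCentre (F : CNF3) (σ : ℕ → Bool) (x : ℕ) : ℕ :=
  if x % 2 = 0 then
    match trueLit F σ (x / 2) with
    | some i => cycVert (F.lit (x / 2) i).1 (attachIdx F (F.lit (x / 2) i).1 (x / 2))
    | none => x
  else
    cycVert (Nat.unpair (x / 2)).1 (cycCentre (σ (Nat.unpair (x / 2)).1)
      (6 * occCount F (Nat.unpair (x / 2)).1) (Nat.unpair (x / 2)).2)

lemma starCentre_cycVert (F : CNF3) (σ : ℕ → Bool) (v i : ℕ) :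
    starCentre F σ (cycVert v i) = cycVert v (cycCentre (σ v) (6 * occCount F v) i) := by
  have h1 : cycVert v i % 2 ≠ 0 := by unfold cycVert; omega
  have h2 : cycVert v i / 2 = Nat.pair v i := by unfold cycVert; omega
  simp [starCentre, h1, h2]

lemma starCentre_clVert {F : CNF3} {σ : ℕ → Bool} {c : ℕ} {i : Fin 3}
    (h : trueLit F σ c = some i) :
    starCentre F σ (clVert c) = cycVert (F.lit c i).1 (attachIdx F (F.lit c i).1 c) := by
  simp [starCentre, clVert, h]

/-- The edges deleted on account of the clause `c`: two edges on each of the cycles of its three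
variables, and the edges at the clause vertex other than the one to its true literal. -/
noncomputable def clauseCut (F : CNF3) (σ : ℕ → Bool) (c : ℕ) : Finset (ℕ × ℕ) :=
  (Finset.univ : Finset (Fin 3 × Bool)).image (fun q =>
    (cycVert (F.lit c q.1).1
        (cutIdx (σ (F.lit c q.1).1) (occIndex F (F.lit c q.1).1 c) q.2),
      cycVert (F.lit c q.1).1
        (cutIdx (σ (F.lit c q.1).1) (occIndex F (F.lit c q.1).1 c) q.2 + 1))) ∪
  (Finset.univ.filter fun i : Fin 3 => trueLit F σ c ≠ some i).image (fun i =>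
    (clVert c, cycVert (F.lit c i).1 (attachIdx F (F.lit c i).1 c)))

open Classical in
lemma card_clauseCut_le (F : CNF3) (σ : ℕ → Bool) (c : ℕ) :
    (clauseCut F σ c).card ≤
      8 + if ∃ i : Fin 3, σ (F.lit c i).1 = (F.lit c i).2 then 0 else 1 := by
  have h2 : (Finset.univ.filter fun i : Fin 3 => trueLit F σ c ≠ some i).card ≤
      2 + if ∃ i : Fin 3, σ (F.lit c i).1 = (F.lit c i).2 then 0 else 1 := by
    unfold trueLit
    split_ifs with h
    · generalize h.choose = k
      revert k
      decide
    · simp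
  refine (Finset.card_union_le _ _).trans ?_
  have h1 := Finset.card_image_le (s := (Finset.univ : Finset (Fin 3 × Bool))) (f := fun q =>
    (cycVert (F.lit c q.1).1
        (cutIdx (σ (F.lit c q.1).1) (occIndex F (F.lit c q.1).1 c) q.2),
      cycVert (F.lit c q.1).1
        (cutIdx (σ (F.lit c q.1).1) (occIndex F (F.lit c q.1).1 c) q.2 + 1)))
  have hcard : (Finset.univ : Finset (Fin 3 × Bool)).card = 6 := rfl
  rw [hcard] at h1
  exact (add_le_add h1 (Finset.card_image_le.trans h2)).trans (by omega)

lemma card_biUnion_clauseCut_le (F : CNF3) (σ : ℕ → Bool) :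
    ((Finset.range F.m).biUnion (clauseCut F σ)).card ≤
      8 * F.m + (F.m - satCount F σ) := by
  classical
  refine Finset.card_biUnion_le.trans
    ((Finset.sum_le_sum fun c _ => card_clauseCut_le F σ c).trans ?_)
  have h := Finset.card_filter_add_card_filter_not (s := Finset.range F.m)
    (fun c => ∃ i : Fin 3, σ (F.lit c i).1 = (F.lit c i).2)
  rw [Finset.card_range] at h
  have hsat : satCount F σ = ((Finset.range F.m).filter
    (fun c => ∃ i : Fin 3, σ (F.lit c i).1 = (F.lit c i).2)).card := by
    unfold satCount
    congr!
  have hsum : (∑ c ∈ Finset.range F.m,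
      if ∃ i : Fin 3, σ (F.lit c i).1 = (F.lit c i).2 then 0 else 1) =
      ((Finset.range F.m).filter
        (fun c => ¬ ∃ i : Fin 3, σ (F.lit c i).1 = (F.lit c i).2)).card := by
    rw [Finset.card_filter]
    exact Finset.sum_congr rfl fun c _ => by split_ifs <;> rfl
  rw [Finset.sum_add_distrib, hsum, Finset.sum_const, Finset.card_range, smul_eq_mul]
  omega

lemma adjF0_cases {F : CNF3} (σ : ℕ → Bool) {x y : ℕ} (h : AdjF0 F x y) :
    StarEdge (starCentre F σ) x y ∨ (x, y) ∈ (Finset.range F.m).biUnion (clauseCut F σ) := by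
  rcases h with ⟨v, i, h1, hi, rfl, rfl⟩ | ⟨c, hc, v, ⟨k, rfl⟩, rfl, rfl⟩
  · rcases cycle_edge_cases (σ v) h1 hi with ⟨he, hcen⟩ | ⟨hsucc, j, hj, s, rfl⟩
    · left
      rw [StarEdge, starCentre_cycVert, starCentre_cycVert, ← he]
      refine ⟨rfl, ?_⟩
      simpa only [cycVert_inj, true_and, ← he] using hcen
    · right
      rw [hsucc]
      obtain ⟨c, hc, ⟨k, rfl⟩, rfl⟩ := exists_occIndex_eq hj
      refine Finset.mem_biUnion.mpr ⟨c, Finset.mem_range.mpr hc, ?_⟩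
      exact Finset.mem_union_left _
        (Finset.mem_image.mpr ⟨(k, s), Finset.mem_univ _, rfl⟩)
  · by_cases hk : trueLit F σ c = some k
    · left
      have hfix : starCentre F σ (cycVert (F.lit c k).1 (attachIdx F (F.lit c k).1 c)) =
          cycVert (F.lit c k).1 (attachIdx F (F.lit c k).1 c) := by
        rw [starCentre_cycVert, cycCentre_attachIdx hc (trueLit_spec hk)]
      exact ⟨by rw [starCentre_clVert hk, hfix], Or.inr hfix.symm⟩
    · right
      refine Finset.mem_biUnion.mpr ⟨c, Finset.mem_range.mpr hc, ?_⟩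
      exact Finset.mem_union_right _
        (Finset.mem_image.mpr ⟨k, by simpa using hk, rfl⟩)

lemma exists_satCount_eq_maxSat (F : CNF3) : ∃ σ, maxSat F = satCount F σ := by
  refine Nat.sSup_mem (s := {t | ∃ σ, t = satCount F σ})
    ⟨satCount F fun _ => true, _, rfl⟩ ⟨F.m, ?_⟩
  rintro _ ⟨σ, rfl⟩
  exact (Finset.card_filter_le _ _).trans (Finset.card_range _).le

/-- Let `φ` be a 3-CNF formula with `M` clauses (three distinct
variables per clause), each variable occurring at most four times, with the
alternation condition on variables occurring twice positively and twice
negatively.  Then the constructed graph `G_φ` can be transformed into a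
disjoint union of bicliques by a sequence of at most
`8M + (M - OPT(φ)) = 9M - OPT(φ)` edge editions and vertex splittings. -/
theorem construction_upper_bound (F : CNF3) (G : BGraph) (hG : IsGF F G)
    (h4 : ∀ v, occCount F v ≤ 4) (halt : Alternating F) :
    ∃ L, L.length ≤ 8 * F.m + (F.m - maxSat F) ∧ Solves true true L G := by
  obtain ⟨σ, hσ⟩ := exists_satCount_eq_maxSat F
  obtain ⟨-, -, hadj⟩ := hG
  obtain ⟨L, hL, hsol⟩ := exists_solution_of_stars G (starCentre F σ)
    ((Finset.range F.m).biUnion (clauseCut F σ))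
    (fun x h => not_adjF_self F x ((hadj x x).mp h))
    (fun x y h => by
      rcases (hadj x y).mp h with h | h
      · exact (adjF0_cases σ h).imp_right Or.inl
      · exact (adjF0_cases σ h).imp (fun h' => ⟨h'.1.symm, h'.2.symm⟩) Or.inr)
  exact ⟨L, hσ ▸ hL.trans (card_biUnion_clauseCut_le F σ), hsol⟩

end BCE
end
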